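/- For every N ≥ 0 and all 0 ≤ i ≤ N, 0 ≤ j ≤ N, the reverse-Pascal (martingale) identity 2·K^(N)_{ij} = K^(N+1)_{i,j+1} + K^(N+1)_{ij} holds. -/

import Mathlib

/-! The column `j` of the Krawtchouk matrix has generating function
`∑ᵢ K^(N)_{ij} Xⁱ = (1 - X)^j (1 + X)^(N - j)` (`kraw_eq_coeff`). The identity is therefore the
coefficient of `Xⁱ` in `2 P = (1 - X) P + (1 + X) P`, with `P` this generating function. -/

/-- The `(i,j)` entry of the `N`-th Krawtchouk matrix:
`K^(N)_{ij} = ∑_k (−1)^k C(j,k) C(N−j, i−k)`. -/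
def kraw (N i j : ℕ) : ℤ :=
  ∑ k ∈ Finset.range (i + 1), (-1 : ℤ) ^ k * (j.choose k) * ((N - j).choose (i - k))

open Polynomial in
theorem coeff_one_sub_X_pow_int (j k : ℕ) :
    ((1 - X : ℤ[X]) ^ j).coeff k = (-1) ^ k * (j.choose k : ℤ) := by
  -- `(1 - X)^j` is `(1 + X)^j` evaluated at `-X`.
  have h : (1 - X : ℤ[X]) ^ j = ((1 + X) ^ j).comp (C (-1) * X) := by
    simp [sub_eq_add_neg]
  rw [h, comp_C_mul_X_coeff, coeff_one_add_X_pow, mul_comm]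

open Polynomial in
/-- The generating function of column `j`, stated with `n = N - j` so that no truncated
subtraction appears. -/
theorem kraw_eq_coeff (n i j : ℕ) :
    kraw (j + n) i j = ((1 - X : ℤ[X]) ^ j * (1 + X) ^ n).coeff i := by
  rw [coeff_mul, Finset.Nat.sum_antidiagonal_eq_sum_range_succ_mk]
  simp [kraw, coeff_one_sub_X_pow_int, coeff_one_add_X_pow]

/-- The reverse-Pascal (martingale) identity
`2 K^(N)_{ij} = K^(N+1)_{i,j+1} + K^(N+1)_{ij}`. -/
theorem krawtchouk_reverse_pascal (N i j : ℕ) (hi : i ≤ N) (hj : j ≤ N) :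
    2 * kraw N i j = kraw (N + 1) i (j + 1) + kraw (N + 1) i j := by
  obtain ⟨n, rfl⟩ := Nat.exists_eq_add_of_le hj
  have h1 := kraw_eq_coeff n i (j + 1)
  have h2 := kraw_eq_coeff (n + 1) i j
  rw [add_right_comm] at h1
  rw [← add_assoc] at h2
  rw [h1, h2, kraw_eq_coeff, ← Polynomial.coeff_add, two_mul, ← Polynomial.coeff_add]
  congr 1
  ring
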